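/- In the Black–Scholes Asian setting, let f(x) = e^{−μT}·max(S_A(x) − K, 0) be the discounted payoff of the arithmetic Asian call option, and let ρ be the standard normal density. Fix j ∈ {1,…,d} such that either a_{ij} ≥ 0 for all i ∈ {1,…,d} or a_{ij} ≤ 0 for all i ∈ {1,…,d}. Then for every subset v ⊆ {1,…,d} with j ∈ v, the conditional expectation P_v f is C^∞ on ℝ^{d−|v|}. -/

import Mathlib

/-!
Write `S` for `S_A`, a sum of exponentials of linear forms with positive weights. Since `AAᵀ` is
nonsingular, column `j` of `A` is not zero, and as it has constant sign, `|∂S/∂x_j|` is at least a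
constant times one exponential of a linear form. Hence `R = 1 / (∂S/∂x_j)` is smooth and grows at
most exponentially, even where `S` as a function of `x_j` has a positive limit at one end. The
algebra generated by the constants, the coordinates, the exponentials of linear forms and `R` (the
*amplitudes*, `Amplitude`) consists of functions of at most exponential growth and is closed under
partial derivatives. All of them are integrable against the Gaussian weight, locally uniformly in
the remaining variables `y`.

For `φ` smooth with bounded derivative and an amplitude `Q`, differentiating `P_v (φ(S) Q)` in a
direction `k ∉ v` under the integral gives `P_v (φ(S) ∂_kQ + φ'(S) ∂_kS Q)`. Here
`φ'(S) ∂_kS Q = ∂_j(φ(S)) · (R ∂_kS Q)`, so Gaussian integration by parts in `x_j`, `j ∈ v`, turns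
the whole expression into `P_v (φ(S) E_k)`, where
`E_k = ∂_kQ + x_j R ∂_kS Q - ∂_j(R ∂_kS Q)` is an amplitude that does not depend on `φ`
(`exists_hasFDerivAt_of_smooth`). The formula involves no derivative of `φ`, so it passes to the
call payoff `φ(u) = max(u - K, 0)` by uniform approximation (`exists_hasFDerivAt_call`). The
functions `P_v (max(S - K, 0) Q)` thus form a class closed under partial derivatives, and all of
them are `C^∞` (`contDiff_call`).
-/

open MeasureTheory Set Filter

/-- The standard normal density. -/
noncomputable def stdNormalPdf : ℝ → ℝ :=
  fun x => (Real.sqrt (2 * Real.pi))⁻¹ * Real.exp (-x ^ 2 / 2)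

/-- The simulated asset price `S_i(x) = S_0·exp[(μ − σ²/2)·t_i + σ·Σ_k a_{ik} x_k]`
at time `t_i = i·Δt` (with `i = 1,…,d`). -/
noncomputable def Sprice (d : ℕ) (S0 σ μ Δt : ℝ) (A : Matrix (Fin d) (Fin d) ℝ)
    (i : Fin d) (x : Fin d → ℝ) : ℝ :=
  S0 * Real.exp ((μ - σ ^ 2 / 2) * ((i : ℕ) + 1) * Δt + σ * ∑ k, A i k * x k)

/-- Fill in the coordinates in `v` with `z` and the coordinates outside `v` with `y`. -/
def insv {d : ℕ} (v : Finset (Fin d)) (z : {i : Fin d // i ∈ v} → ℝ)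
    (y : {i : Fin d // i ∉ v} → ℝ) : Fin d → ℝ :=
  fun i => if h : i ∈ v then z ⟨i, h⟩ else y ⟨i, h⟩

/-- `(P_v f)(x_{-v}) = ∫_{ℝ^{|v|}} f(x_v, x_{-v}) ∏_{i∈v} ρ(x_i) dx_v`. -/
noncomputable def Pv {d : ℕ} (v : Finset (Fin d)) (ρ : ℝ → ℝ) (f : (Fin d → ℝ) → ℝ) :
    ({i : Fin d // i ∉ v} → ℝ) → ℝ :=
  fun y => ∫ z : {i : Fin d // i ∈ v} → ℝ,
    f (insv v z y) * ∏ i : {i : Fin d // i ∈ v}, ρ (z i)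

/-! ### Basic notions -/

/-- Exponential growth in the `ℓ¹` norm. One constant serves both as the factor and as the rate. -/
def ExpGrowth {d : ℕ} (h : (Fin d → ℝ) → ℝ) : Prop :=
  ∃ C : ℝ, 0 ≤ C ∧ ∀ x, |h x| ≤ C * Real.exp (C * ∑ i, |x i|)

/-- The functions `D k` are the partial derivatives of the differentiable function `h`. -/
def HasGrad {d : ℕ} (h : (Fin d → ℝ) → ℝ) (D : Fin d → (Fin d → ℝ) → ℝ) : Prop :=
  ∀ x, HasFDerivAt h
    (∑ k, D k x • (ContinuousLinearMap.proj k : (Fin d → ℝ) →L[ℝ] ℝ)) x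

/-- The sum of exponentials `∑ i, c i · exp ⟨b i, x⟩` with weights `c i`, where `b i` is row `i`
of `b`. -/
noncomputable def expSum {d : ℕ} (c : Fin d → ℝ) (b : Fin d → Fin d → ℝ) (x : Fin d → ℝ) : ℝ :=
  ∑ i, c i * Real.exp (∑ k, b i k * x k)

/-- The algebra of functions generated by the constants, the coordinates, the exponentials of
linear forms, and the function `R` (below, the reciprocal of `∂S/∂x_j`). -/
inductive Amplitude {d : ℕ} (R : (Fin d → ℝ) → ℝ) : ((Fin d → ℝ) → ℝ) → Prop
  | const (c : ℝ) : Amplitude R (fun _ => c)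
  | coord (k : Fin d) : Amplitude R (fun x => x k)
  | expLin (b : Fin d → ℝ) : Amplitude R (fun x => Real.exp (∑ k, b k * x k))
  | recip : Amplitude R R
  | add {f g : (Fin d → ℝ) → ℝ} : Amplitude R f → Amplitude R g → Amplitude R (fun x => f x + g x)
  | mul {f g : (Fin d → ℝ) → ℝ} : Amplitude R f → Amplitude R g → Amplitude R (fun x => f x * g x)

/-! ### Exponential growth -/

section Growth

variable {d : ℕ} {f g : (Fin d → ℝ) → ℝ}

lemma ExpGrowth.of_bound {C c : ℝ} (hC : 0 ≤ C)
    (h : ∀ x, |f x| ≤ C * Real.exp (c * ∑ i, |x i|)) : ExpGrowth f := by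
  refine ⟨max C c, le_max_of_le_left hC, fun x => (h x).trans ?_⟩
  have hN : 0 ≤ ∑ i, |x i| := Finset.sum_nonneg fun i _ => abs_nonneg _
  gcongr
  · exact le_max_left _ _
  · exact le_max_right _ _

lemma ExpGrowth.mono (hg : ExpGrowth g) (h : ∀ x, |f x| ≤ |g x|) : ExpGrowth f := by
  obtain ⟨C, hC, hb⟩ := hg
  exact ⟨C, hC, fun x => (h x).trans (hb x)⟩

lemma ExpGrowth.const (c : ℝ) : ExpGrowth (fun _ : Fin d → ℝ => c) :=
  .of_bound (C := |c|) (c := 0) (abs_nonneg c) fun x => by simp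

lemma ExpGrowth.add (hf : ExpGrowth f) (hg : ExpGrowth g) : ExpGrowth (fun x => f x + g x) := by
  obtain ⟨C, hC, hb⟩ := hf
  obtain ⟨C', hC', hb'⟩ := hg
  refine .of_bound (C := C + C') (c := C + C') (by positivity) fun x => ?_
  have hN : 0 ≤ ∑ i, |x i| := Finset.sum_nonneg fun i _ => abs_nonneg _
  calc |f x + g x| ≤ |f x| + |g x| := abs_add_le _ _
    _ ≤ C * Real.exp (C * ∑ i, |x i|) + C' * Real.exp (C' * ∑ i, |x i|) := add_le_add (hb x) (hb' x)
    _ ≤ C * Real.exp ((C + C') * ∑ i, |x i|) + C' * Real.exp ((C + C') * ∑ i, |x i|) := by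
      gcongr <;> linarith
    _ = _ := by ring

lemma ExpGrowth.mul (hf : ExpGrowth f) (hg : ExpGrowth g) : ExpGrowth (fun x => f x * g x) := by
  obtain ⟨C, hC, hb⟩ := hf
  obtain ⟨C', hC', hb'⟩ := hg
  refine .of_bound (C := C * C') (c := C + C') (by positivity) fun x => ?_
  rw [abs_mul, add_mul, Real.exp_add]
  calc |f x| * |g x| ≤ (C * Real.exp (C * ∑ i, |x i|)) * (C' * Real.exp (C' * ∑ i, |x i|)) :=
        mul_le_mul (hb x) (hb' x) (abs_nonneg _) (by positivity)
    _ = _ := by ring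

lemma ExpGrowth.coord (k : Fin d) : ExpGrowth (fun x => x k) := by
  refine .of_bound (C := 1) (c := 1) zero_le_one fun x => ?_
  have h1 : |x k| ≤ ∑ i, |x i| :=
    Finset.single_le_sum (f := fun i => |x i|) (fun i _ => abs_nonneg _) (Finset.mem_univ k)
  have h2 := Real.add_one_le_exp (∑ i, |x i|)
  rw [one_mul, one_mul]
  linarith

lemma ExpGrowth.expLin (b : Fin d → ℝ) :
    ExpGrowth (fun x => Real.exp (∑ k, b k * x k)) := by
  refine .of_bound (C := 1) (c := ∑ k, |b k|) zero_le_one fun x => ?_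
  rw [one_mul, Real.abs_exp, Real.exp_le_exp, Finset.sum_mul]
  refine Finset.sum_le_sum fun k _ => ?_
  have h1 : |x k| ≤ ∑ i, |x i| :=
    Finset.single_le_sum (f := fun i => |x i|) (fun i _ => abs_nonneg _) (Finset.mem_univ k)
  calc b k * x k ≤ |b k * x k| := le_abs_self _
    _ = |b k| * |x k| := abs_mul _ _
    _ ≤ _ := by gcongr

end Growth

/-! ### Partial derivatives -/

section Gradients

variable {d : ℕ} {f g : (Fin d → ℝ) → ℝ} {D E : Fin d → (Fin d → ℝ) → ℝ}

lemma HasGrad.add (hf : HasGrad f D) (hg : HasGrad g E) :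
    HasGrad (fun x => f x + g x) (fun k x => D k x + E k x) := fun x => by
  simp only [add_smul, Finset.sum_add_distrib]
  exact (hf x).add (hg x)

lemma HasGrad.mul (hf : HasGrad f D) (hg : HasGrad g E) :
    HasGrad (fun x => f x * g x) (fun k x => f x * E k x + g x * D k x) := fun x => by
  simp only [add_smul, mul_smul, Finset.sum_add_distrib, ← Finset.smul_sum]
  exact (hf x).mul (hg x)

lemma HasGrad.comp {φ φ' : ℝ → ℝ} (hφ : ∀ u, HasDerivAt φ (φ' u) u) (hf : HasGrad f D) :
    HasGrad (fun x => φ (f x)) (fun k x => φ' (f x) * D k x) := fun x => by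
  simp only [mul_smul, ← Finset.smul_sum]
  exact (hφ (f x)).comp_hasFDerivAt x (hf x)

lemma HasGrad.continuous (hf : HasGrad f D) : Continuous f :=
  continuous_iff_continuousAt.2 fun x => (hf x).continuousAt

lemma HasGrad.const (c : ℝ) : HasGrad (fun _ : Fin d → ℝ => c) (fun _ _ => 0) := fun x => by
  simpa using hasFDerivAt_const c x

lemma HasGrad.coord (k : Fin d) :
    HasGrad (fun x => x k) (fun l _ => if l = k then 1 else 0) := fun x => by
  simp only [ite_smul, one_smul, zero_smul, Finset.sum_ite_eq', Finset.mem_univ, if_true]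
  exact (ContinuousLinearMap.proj (R := ℝ) (φ := fun _ : Fin d => ℝ) k).hasFDerivAt

lemma HasGrad.expLin (b : Fin d → ℝ) :
    HasGrad (fun x => Real.exp (∑ k, b k * x k))
      (fun k x => Real.exp (∑ k, b k * x k) * b k) := by
  refine HasGrad.comp (φ' := Real.exp) Real.hasDerivAt_exp (D := fun k _ => b k) fun x => ?_
  refine HasFDerivAt.fun_sum fun k _ => ?_
  exact ((ContinuousLinearMap.proj (R := ℝ) (φ := fun _ : Fin d => ℝ) k).hasFDerivAt).const_mul _

lemma HasGrad.expSum (c : Fin d → ℝ) (b : Fin d → Fin d → ℝ) :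
    HasGrad (expSum c b) (fun k => expSum (fun i => c i * b i k) b) := fun x => by
  have h := HasFDerivAt.fun_sum (u := Finset.univ) (x := x)
    (A := fun i x => c i * Real.exp (∑ k, b i k * x k))
    fun i _ => (HasGrad.expLin (b i) x).const_mul (c i)
  refine h.congr_fderiv ?_
  simp only [_root_.expSum, Finset.smul_sum, Finset.sum_smul]
  rw [Finset.sum_comm]
  refine Finset.sum_congr rfl fun i _ => Finset.sum_congr rfl fun k _ => ?_
  rw [smul_smul]
  congr 1
  ring

end Gradients

/-! ### Amplitudes -/

section Amplitudes

variable {d : ℕ} {R : (Fin d → ℝ) → ℝ}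

lemma Amplitude.sum {ι : Type*} (s : Finset ι) {F : ι → (Fin d → ℝ) → ℝ}
    (h : ∀ i, Amplitude R (F i)) : Amplitude R (fun x => ∑ i ∈ s, F i x) := by
  classical
  induction s using Finset.induction_on with
  | empty => simpa using Amplitude.const 0
  | insert a s ha ih =>
    simp only [Finset.sum_insert ha]
    exact (h a).add ih

lemma Amplitude.expSum (c : Fin d → ℝ) (b : Fin d → Fin d → ℝ) : Amplitude R (expSum c b) :=
  Amplitude.sum _ fun i => (Amplitude.const (c i)).mul (Amplitude.expLin (b i))

lemma Amplitude.expGrowth (hR : ExpGrowth R) {Q : (Fin d → ℝ) → ℝ} (hQ : Amplitude R Q) :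
    ExpGrowth Q := by
  induction hQ with
  | const c => exact .const c
  | coord k => exact .coord k
  | expLin b => exact .expLin b
  | recip => exact hR
  | add _ _ h1 h2 => exact h1.add h2
  | mul _ _ h1 h2 => exact h1.mul h2

/-- The amplitudes are closed under partial derivatives as soon as those of `R` are amplitudes. -/
lemma Amplitude.exists_grad {D : Fin d → (Fin d → ℝ) → ℝ} (hD : HasGrad R D)
    (hDA : ∀ k, Amplitude R (D k)) {Q : (Fin d → ℝ) → ℝ} (hQ : Amplitude R Q) :
    ∃ E, (∀ k, Amplitude R (E k)) ∧ HasGrad Q E := by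
  induction hQ with
  | const c => exact ⟨_, fun k => .const 0, .const c⟩
  | coord k => exact ⟨_, fun l => .const _, .coord k⟩
  | expLin b => exact ⟨_, fun k => (Amplitude.expLin b).mul (.const (b k)), .expLin b⟩
  | recip => exact ⟨D, hDA, hD⟩
  | add _ _ h1 h2 =>
    obtain ⟨E, hE, hE'⟩ := h1
    obtain ⟨F, hF, hF'⟩ := h2
    exact ⟨_, fun k => (hE k).add (hF k), hE'.add hF'⟩
  | mul hf hg h1 h2 =>
    obtain ⟨E, hE, hE'⟩ := h1
    obtain ⟨F, hF, hF'⟩ := h2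
    exact ⟨_, fun k => (hf.mul (hF k)).add (hg.mul (hE k)), hE'.mul hF'⟩

/-- If the weights have constant sign and `c i₀ ≠ 0`, the sum of exponentials is in absolute value at
least its `i₀`-th term, so that its reciprocal is bounded by a multiple of one exponential. -/
lemma expSum_sign {c : Fin d → ℝ} (b : Fin d → Fin d → ℝ)
    (hc : (∀ i, 0 ≤ c i) ∨ (∀ i, c i ≤ 0)) {i₀ : Fin d} (hi : c i₀ ≠ 0) :
    (∀ x, expSum c b x ≠ 0) ∧ ExpGrowth (fun x => (expSum c b x)⁻¹) := by
  have key : ∀ x, |c i₀| * Real.exp (∑ k, b i₀ k * x k) ≤ |expSum c b x| := by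
    intro x
    have h1 : |expSum c b x| = ∑ i, |c i| * Real.exp (∑ k, b i k * x k) := by
      rcases hc with hc | hc
      · rw [abs_of_nonneg]
        · simp only [expSum, abs_of_nonneg (hc _)]
        · exact Finset.sum_nonneg fun i _ => mul_nonneg (hc i) (Real.exp_pos _).le
      · rw [abs_of_nonpos]
        · simp only [expSum, abs_of_nonpos (hc _), neg_mul, Finset.sum_neg_distrib]
        · exact Finset.sum_nonpos fun i _ =>
            mul_nonpos_of_nonpos_of_nonneg (hc i) (Real.exp_pos _).le
    rw [h1]
    exact Finset.single_le_sum (f := fun i => |c i| * Real.exp (∑ k, b i k * x k))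
      (fun i _ => by positivity) (Finset.mem_univ i₀)
  have pos : ∀ x : Fin d → ℝ, 0 < |c i₀| * Real.exp (∑ k, b i₀ k * x k) := fun x => by positivity
  refine ⟨fun x => abs_pos.1 ((pos x).trans_le (key x)), ?_⟩
  refine ((ExpGrowth.const |c i₀|⁻¹).mul (ExpGrowth.expLin (fun k => -b i₀ k))).mono fun x => ?_
  rw [abs_inv]
  refine (inv_anti₀ (pos x) (key x)).trans (le_of_eq ?_)
  rw [mul_inv, ← Real.exp_neg, abs_mul, abs_inv, abs_abs, Real.abs_exp]
  simp

end Amplitudes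

/-! ### Gaussian integrals: differentiation and integration by parts -/

section GaussianIntegrals

variable {d : ℕ} (v : Finset (Fin d))

/-- The weight `∏_{i ∈ v} ρ(z_i)`. -/
noncomputable def gaussWeight (z : {i : Fin d // i ∈ v} → ℝ) : ℝ :=
  ∏ i : {i : Fin d // i ∈ v}, stdNormalPdf (z i)

/-- The coordinate `k` of `insv v z y` as a linear form in `y`; it vanishes for `k ∈ v`. -/
noncomputable def outProj (k : Fin d) : ({i : Fin d // i ∉ v} → ℝ) →L[ℝ] ℝ :=
  if h : k ∈ v then 0 else ContinuousLinearMap.proj ⟨k, h⟩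

/-- The coordinate `k` of `insv v z y` as a linear form in `z`; it vanishes for `k ∉ v`. -/
noncomputable def inProj (k : Fin d) : ({i : Fin d // i ∈ v} → ℝ) →L[ℝ] ℝ :=
  if h : k ∈ v then ContinuousLinearMap.proj ⟨k, h⟩ else 0

variable {v}

lemma stdNormalPdf_pos (x : ℝ) : 0 < stdNormalPdf x := by
  unfold stdNormalPdf
  positivity

lemma gaussWeight_pos (z : {i : Fin d // i ∈ v} → ℝ) : 0 < gaussWeight v z :=
  Finset.prod_pos fun _ _ => stdNormalPdf_pos _

lemma continuous_stdNormalPdf : Continuous stdNormalPdf := by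
  unfold stdNormalPdf
  fun_prop

lemma continuous_gaussWeight : Continuous (gaussWeight v) :=
  continuous_finsetProd _ fun i _ => continuous_stdNormalPdf.comp (continuous_apply i)

lemma insv_apply (z : {i : Fin d // i ∈ v} → ℝ) (y : {i : Fin d // i ∉ v} → ℝ) (k : Fin d) :
    insv v z y k = inProj v k z + outProj v k y := by
  by_cases h : k ∈ v <;> simp [insv, inProj, outProj, h]

lemma continuous_insv_left (y : {i : Fin d // i ∉ v} → ℝ) : Continuous fun z => insv v z y := by
  refine continuous_pi fun k => ?_
  simp only [insv_apply]
  fun_prop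

lemma sum_abs_insv (z : {i : Fin d // i ∈ v} → ℝ) (y : {i : Fin d // i ∉ v} → ℝ) :
    ∑ i, |insv v z y i| = ∑ i, |z i| + ∑ i, |y i| := by
  rw [← Fintype.sum_subtype_add_sum_subtype (fun i => i ∈ v)]
  congr 1
  · exact Finset.sum_congr (by ext; simp) fun i _ => by simp [insv, i.2]
  · exact Finset.sum_congr rfl fun i _ => by simp [insv, i.2]

lemma integrable_exp_abs_mul_stdNormalPdf (C : ℝ) :
    Integrable fun x : ℝ => Real.exp (C * |x|) * stdNormalPdf x := by
  have h : Integrable fun x : ℝ =>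
      (Real.exp (C ^ 2) * (Real.sqrt (2 * Real.pi))⁻¹) * Real.exp (-(1 / 4) * x ^ 2) :=
    (integrable_exp_neg_mul_sq (by norm_num)).const_mul _
  refine h.mono' ?_ (Eventually.of_forall fun x => ?_)
  · exact (Continuous.mul (by fun_prop) continuous_stdNormalPdf).aestronglyMeasurable
  · rw [Real.norm_of_nonneg (mul_nonneg (Real.exp_pos _).le (stdNormalPdf_pos x).le)]
    unfold stdNormalPdf
    -- `C|x| - x²/2 ≤ C² - x²/4` by completing the square
    have h1 : Real.exp (C * |x|) * Real.exp (-x ^ 2 / 2)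
        ≤ Real.exp (C ^ 2) * Real.exp (-(1 / 4) * x ^ 2) := by
      rw [← Real.exp_add, ← Real.exp_add, Real.exp_le_exp]
      nlinarith [sq_nonneg (C - |x| / 2), sq_abs x]
    have h2 : 0 ≤ (Real.sqrt (2 * Real.pi))⁻¹ := by positivity
    calc _ = (Real.sqrt (2 * Real.pi))⁻¹ * (Real.exp (C * |x|) * Real.exp (-x ^ 2 / 2)) := by ring
      _ ≤ (Real.sqrt (2 * Real.pi))⁻¹ * (Real.exp (C ^ 2) * Real.exp (-(1 / 4) * x ^ 2)) := by gcongr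
      _ = _ := by ring

lemma integrable_exp_sum_mul_gaussWeight (C : ℝ) :
    Integrable fun z : {i : Fin d // i ∈ v} → ℝ => Real.exp (C * ∑ i, |z i|) * gaussWeight v z := by
  have h := Integrable.fintype_prod (ι := {i : Fin d // i ∈ v}) (μ := fun _ => (volume : Measure ℝ))
    fun _ => integrable_exp_abs_mul_stdNormalPdf C
  refine h.congr (Eventually.of_forall fun z => ?_)
  simp only [Finset.prod_mul_distrib, ← Real.exp_sum, Finset.mul_sum, gaussWeight]

/-- On an `ℓ¹`-bounded set of `y` the integrand of `Pv` has an integrable majorant. -/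
lemma ExpGrowth.exists_bound {h : (Fin d → ℝ) → ℝ} (hg : ExpGrowth h) (M : ℝ) :
    ∃ B : ({i : Fin d // i ∈ v} → ℝ) → ℝ, Integrable B ∧
      ∀ y : {i : Fin d // i ∉ v} → ℝ, ∑ i, |y i| ≤ M → ∀ z,
        |h (insv v z y)| * gaussWeight v z ≤ B z := by
  obtain ⟨C, hC, hb⟩ := hg
  refine ⟨_, (integrable_exp_sum_mul_gaussWeight C).const_mul (C * Real.exp (C * M)),
    fun y hy z => ?_⟩
  have hw := (gaussWeight_pos z).le
  calc |h (insv v z y)| * gaussWeight v z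
      ≤ (C * Real.exp (C * ∑ i, |insv v z y i|)) * gaussWeight v z := by gcongr; exact hb _
    _ = (C * Real.exp (C * ∑ i, |y i|)) * (Real.exp (C * ∑ i, |z i|) * gaussWeight v z) := by
      rw [sum_abs_insv, mul_add, Real.exp_add]; ring
    _ ≤ _ := by gcongr

lemma ExpGrowth.integrable {h : (Fin d → ℝ) → ℝ} (hg : ExpGrowth h) (hc : Continuous h)
    (y : {i : Fin d // i ∉ v} → ℝ) :
    Integrable fun z => h (insv v z y) * gaussWeight v z := by
  obtain ⟨B, hB, hb⟩ := hg.exists_bound (v := v) (∑ i, |y i|)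
  refine hB.mono' ?_ (Eventually.of_forall fun z => ?_)
  · exact ((hc.comp (continuous_insv_left y)).mul continuous_gaussWeight).aestronglyMeasurable
  · rw [norm_mul, Real.norm_eq_abs, Real.norm_of_nonneg (gaussWeight_pos z).le]
    exact hb y le_rfl z

lemma HasGrad.comp_insv_right {h : (Fin d → ℝ) → ℝ} {D : Fin d → (Fin d → ℝ) → ℝ}
    (hD : HasGrad h D) (z : {i : Fin d // i ∈ v} → ℝ) (y : {i : Fin d // i ∉ v} → ℝ) :
    HasFDerivAt (fun y => h (insv v z y)) (∑ k, D k (insv v z y) • outProj v k) y := by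
  have h1 : HasFDerivAt (fun y => insv v z y) (ContinuousLinearMap.pi (outProj v)) y := by
    refine hasFDerivAt_pi.2 fun k => ?_
    simp only [insv_apply]
    exact (outProj v k).hasFDerivAt.const_add _
  refine ((hD (insv v z y)).comp y h1).congr_fderiv ?_
  ext w
  simp 

lemma HasGrad.comp_insv_left {h : (Fin d → ℝ) → ℝ} {D : Fin d → (Fin d → ℝ) → ℝ}
    (hD : HasGrad h D) (z : {i : Fin d // i ∈ v} → ℝ) (y : {i : Fin d // i ∉ v} → ℝ) :
    HasFDerivAt (fun z => h (insv v z y)) (∑ k, D k (insv v z y) • inProj v k) z := by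
  have h1 : HasFDerivAt (fun z => insv v z y) (ContinuousLinearMap.pi (inProj v)) z := by
    refine hasFDerivAt_pi.2 fun k => ?_
    simp only [insv_apply]
    exact (inProj v k).hasFDerivAt.add_const _
  refine ((hD (insv v z y)).comp z h1).congr_fderiv ?_
  ext w
  simp 

lemma Pv_eq (h : (Fin d → ℝ) → ℝ) (y : {i : Fin d // i ∉ v} → ℝ) :
    Pv v stdNormalPdf h y = ∫ z, h (insv v z y) * gaussWeight v z := rfl

/-- Differentiation under the integral sign. -/
lemma HasGrad.hasFDerivAt_Pv {h : (Fin d → ℝ) → ℝ} {D : Fin d → (Fin d → ℝ) → ℝ}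
    (hD : HasGrad h D) (hg : ExpGrowth h) (hDc : ∀ k, Continuous (D k))
    (hDg : ∀ k, ExpGrowth (D k)) (y₀ : {i : Fin d // i ∉ v} → ℝ) :
    HasFDerivAt (Pv v stdNormalPdf h) (∑ k, Pv v stdNormalPdf (D k) y₀ • outProj v k) y₀ := by
  choose B hB hb using fun k => (hDg k).exists_bound (v := v) (∑ i, |y₀ i| + 1)
  have hs : {y : {i : Fin d // i ∉ v} → ℝ | ∑ i, |y i| < ∑ i, |y₀ i| + 1} ∈ nhds y₀ :=
    (isOpen_lt (by fun_prop) continuous_const).mem_nhds (by simp)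
  have hint : ∀ k, Integrable fun z => (D k (insv v z y₀) * gaussWeight v z) • outProj v k :=
    fun k => ((hDg k).integrable (hDc k) y₀).smul_const (outProj v k)
  have hbound : ∀ (z : {i : Fin d // i ∈ v} → ℝ) (y : {i : Fin d // i ∉ v} → ℝ),
      ∑ i, |y i| < ∑ i, |y₀ i| + 1 →
      ‖∑ k, (D k (insv v z y) * gaussWeight v z) • outProj v k‖ ≤ ∑ k, B k z * ‖outProj v k‖ := by
    intro z y hy
    refine (norm_sum_le _ _).trans (Finset.sum_le_sum fun k _ => ?_)
    rw [norm_smul, norm_mul, Real.norm_eq_abs, Real.norm_of_nonneg (gaussWeight_pos z).le]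
    exact mul_le_mul_of_nonneg_right (hb k y hy.le z) (norm_nonneg _)
  have hdiff : ∀ (z : {i : Fin d // i ∈ v} → ℝ) (y : {i : Fin d // i ∉ v} → ℝ),
      HasFDerivAt (fun y => h (insv v z y) * gaussWeight v z)
        (∑ k, (D k (insv v z y) * gaussWeight v z) • outProj v k) y := by
    intro z y
    refine ((hD.comp_insv_right z y).mul_const (gaussWeight v z)).congr_fderiv ?_
    rw [Finset.smul_sum]
    refine Finset.sum_congr rfl fun k _ => ?_
    rw [smul_smul, mul_comm]
  have hmeas : ∀ᶠ y in nhds y₀,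
      AEStronglyMeasurable (fun z => h (insv v z y) * gaussWeight v z) volume :=
    Eventually.of_forall fun y => (hg.integrable hD.continuous y).aestronglyMeasurable
  have hmeas' : AEStronglyMeasurable
      (fun z => ∑ k, (D k (insv v z y₀) * gaussWeight v z) • outProj v k) volume :=
    Finset.aestronglyMeasurable_fun_sum _ fun k _ => (hint k).aestronglyMeasurable
  have hBi : Integrable fun z => ∑ k, B k z * ‖outProj v k‖ :=
    integrable_finsetSum _ fun k _ => (hB k).mul_const _
  have main : HasFDerivAt (fun y => ∫ z, h (insv v z y) * gaussWeight v z)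
      (∫ z, ∑ k, (D k (insv v z y₀) * gaussWeight v z) • outProj v k) y₀ :=
    hasFDerivAt_integral_of_dominated_of_fderiv_le
      (F' := fun y z => ∑ k, (D k (insv v z y) * gaussWeight v z) • outProj v k) hs
      hmeas (hg.integrable hD.continuous y₀) hmeas'
      (Eventually.of_forall hbound) hBi (Eventually.of_forall fun z y _ => hdiff z y)
  rw [integral_finsetSum _ fun k _ => hint k] at main
  simp only [integral_smul_const, ← Pv_eq] at main
  exact main

lemma hasFDerivAt_gaussWeight (z : {i : Fin d // i ∈ v} → ℝ) :
    HasFDerivAt (gaussWeight v)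
      (∑ i, (-z i * gaussWeight v z) •
        (ContinuousLinearMap.proj i : ({i : Fin d // i ∈ v} → ℝ) →L[ℝ] ℝ)) z := by
  have h1 : ∀ x, HasDerivAt stdNormalPdf (-x * stdNormalPdf x) x := fun x => by
    unfold stdNormalPdf
    have := ((((hasDerivAt_id x).pow 2).neg.div_const 2).exp).const_mul (Real.sqrt (2 * Real.pi))⁻¹
    refine this.congr_deriv ?_
    simp
    ring
  have hc : ∀ i, HasFDerivAt (fun z : {i : Fin d // i ∈ v} → ℝ => stdNormalPdf (z i))
      ((-z i * stdNormalPdf (z i)) •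
        (ContinuousLinearMap.proj i : ({i : Fin d // i ∈ v} → ℝ) →L[ℝ] ℝ)) z := fun i =>
    HasDerivAt.comp_hasFDerivAt (h₂ := stdNormalPdf)
      (f := fun z : {i : Fin d // i ∈ v} → ℝ => z i) z (h1 (z i))
      (ContinuousLinearMap.proj (R := ℝ) (φ := fun _ : {i : Fin d // i ∈ v} => ℝ) i).hasFDerivAt
  have h2 := HasFDerivAt.finsetProd (u := Finset.univ) fun i _ => hc i
  refine h2.congr_fderiv (Finset.sum_congr rfl fun i _ => ?_)
  rw [smul_smul]
  congr 1
  rw [gaussWeight, ← Finset.mul_prod_erase _ _ (Finset.mem_univ i)]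
  ring

/-- Gaussian integration by parts in the direction `j ∈ v`: `E[∂_j h] = E[x_j h]`. -/
lemma HasGrad.Pv_partial_eq {h : (Fin d → ℝ) → ℝ} {D : Fin d → (Fin d → ℝ) → ℝ}
    (hD : HasGrad h D) (hg : ExpGrowth h) {j : Fin d} (hj : j ∈ v) (hDc : Continuous (D j))
    (hDg : ExpGrowth (D j)) (y : {i : Fin d // i ∉ v} → ℝ) :
    Pv v stdNormalPdf (D j) y = Pv v stdNormalPdf (fun x => x j * h x) y := by
  have e1 : ∀ z : {i : Fin d // i ∈ v} → ℝ,
      (∑ k, D k (insv v z y) • inProj v k) (Pi.single ⟨j, hj⟩ 1) = D j (insv v z y) := by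
    intro z
    rw [sum_apply, Finset.sum_eq_single j]
    · simp [inProj, hj]
    · intro k _ hk
      by_cases hkv : k ∈ v <;> simp [inProj, hkv, hk]
    · simp
  have e2 : ∀ z : {i : Fin d // i ∈ v} → ℝ,
      (∑ i, (-z i * gaussWeight v z) •
        (ContinuousLinearMap.proj i : ({i : Fin d // i ∈ v} → ℝ) →L[ℝ] ℝ)) (Pi.single ⟨j, hj⟩ 1)
        = -(insv v z y j * gaussWeight v z) := by
    intro z
    simp [Pi.single_apply, insv, hj]
  have hxg := (ExpGrowth.coord j).mul hg
  have hxi := hxg.integrable ((continuous_apply j).mul hD.continuous) (v := v) y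
  have hcongr : ∀ z : {i : Fin d // i ∈ v} → ℝ,
      h (insv v z y) * -(insv v z y j * gaussWeight v z)
        = -((insv v z y j * h (insv v z y)) * gaussWeight v z) := fun z => by ring
  have main := integral_bilinear_hasFDerivAt_right_eq_neg_left_of_integrable
    (μ := (volume : Measure ({i : Fin d // i ∈ v} → ℝ)))
    (B := ContinuousLinearMap.mul ℝ ℝ) (v := Pi.single ⟨j, hj⟩ 1)
    (f := fun z => h (insv v z y)) (g := gaussWeight v)
    (f' := fun z => ∑ k, D k (insv v z y) • inProj v k)
    (g' := fun z => ∑ i, (-z i * gaussWeight v z) • ContinuousLinearMap.proj i)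
    (by simp only [e1, ContinuousLinearMap.mul_apply']; exact hDg.integrable hDc y)
    (by simp only [e2, ContinuousLinearMap.mul_apply', hcongr]; exact hxi.neg)
    (hg.integrable hD.continuous y)
    (fun z _ => hD.comp_insv_left z y) (fun z _ => hasFDerivAt_gaussWeight z)
  simp only [e1, e2, ContinuousLinearMap.mul_apply', hcongr, integral_neg] at main
  exact (neg_injective main).symm

end GaussianIntegrals

/-! ### Smoothness for the call payoff -/

section Iteration

variable {d : ℕ} {v : Finset (Fin d)}

lemma Pv_add_sub {a b c : (Fin d → ℝ) → ℝ} (ha : ExpGrowth a) (ha' : Continuous a)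
    (hb : ExpGrowth b) (hb' : Continuous b) (hc : ExpGrowth c) (hc' : Continuous c)
    (y : {i : Fin d // i ∉ v} → ℝ) :
    Pv v stdNormalPdf (fun x => a x + (b x - c x)) y =
      Pv v stdNormalPdf a y + (Pv v stdNormalPdf b y - Pv v stdNormalPdf c y) := by
  have ia := ha.integrable ha' (v := v) y
  have ib := hb.integrable hb' (v := v) y
  have ic := hc.integrable hc' (v := v) y
  simp only [Pv_eq, add_mul, sub_mul]
  rw [integral_add ia (by exact ib.sub ic), integral_sub ib ic]

/-- `Pv` is Lipschitz for the distance `sup |F - G| / |Q|`, uniformly for `y` in an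
`ℓ¹`-ball. -/
lemma ExpGrowth.exists_Pv_sub_le {Q : (Fin d → ℝ) → ℝ} (hQ : ExpGrowth Q) (M : ℝ) :
    ∃ c : ℝ, ∀ y : {i : Fin d // i ∉ v} → ℝ, ∑ i, |y i| ≤ M →
      ∀ F G : (Fin d → ℝ) → ℝ, ExpGrowth F → Continuous F → ExpGrowth G → Continuous G →
      ∀ δ : ℝ, 0 ≤ δ → (∀ x, |F x - G x| ≤ δ * |Q x|) →
        |Pv v stdNormalPdf F y - Pv v stdNormalPdf G y| ≤ δ * c := by
  obtain ⟨B, hB, hb⟩ := hQ.exists_bound (v := v) M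
  refine ⟨∫ z, B z, fun y hy F G hF hF' hG hG' δ hδ h => ?_⟩
  rw [Pv_eq, Pv_eq, ← integral_sub (hF.integrable hF' y) (hG.integrable hG' y),
    ← integral_const_mul, ← Real.norm_eq_abs]
  refine norm_integral_le_of_norm_le (hB.const_mul δ) (Eventually.of_forall fun z => ?_)
  have hw := (gaussWeight_pos z).le
  rw [← sub_mul, norm_mul, Real.norm_eq_abs, Real.norm_of_nonneg hw]
  calc _ ≤ (δ * |Q (insv v z y)|) * gaussWeight v z := by gcongr; exact h _
    _ = δ * (|Q (insv v z y)| * gaussWeight v z) := by ring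
    _ ≤ _ := by gcongr; exact hb y hy z

/-- Smooth approximation of `u ↦ max (u - K) 0 = (|u - K| + (u - K)) / 2`. -/
noncomputable def softCall (K ε u : ℝ) : ℝ := (Real.sqrt ((u - K) ^ 2 + ε ^ 2) + (u - K)) / 2

lemma hasDerivAt_softCall (K : ℝ) {ε : ℝ} (hε : 0 < ε) (u : ℝ) :
    HasDerivAt (softCall K ε) (((u - K) / Real.sqrt ((u - K) ^ 2 + ε ^ 2) + 1) / 2) u := by
  have hpos : (u - K) ^ 2 + ε ^ 2 ≠ 0 := by positivity
  have h1 : HasDerivAt (fun u => u - K) 1 u := (hasDerivAt_id u).sub_const K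
  have h2 := ((((h1.pow 2).add_const (ε ^ 2)).sqrt hpos).add h1).div_const 2
  refine h2.congr_deriv ?_
  have : Real.sqrt ((u - K) ^ 2 + ε ^ 2) ≠ 0 := (Real.sqrt_pos.2 (by positivity)).ne'
  simp
  field_simp

lemma abs_deriv_softCall_le (K : ℝ) {ε : ℝ} (hε : 0 < ε) (u : ℝ) :
    |((u - K) / Real.sqrt ((u - K) ^ 2 + ε ^ 2) + 1) / 2| ≤ 1 := by
  have hs : 0 < Real.sqrt ((u - K) ^ 2 + ε ^ 2) := Real.sqrt_pos.2 (by positivity)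
  have h : |(u - K) / Real.sqrt ((u - K) ^ 2 + ε ^ 2)| ≤ 1 := by
    rw [abs_div, abs_of_pos hs, div_le_one hs]
    exact Real.abs_le_sqrt (by nlinarith)
  rw [abs_le] at h ⊢
  constructor <;> linarith [h.1, h.2]

lemma abs_softCall_sub_le (K : ℝ) {ε : ℝ} (hε : 0 < ε) (u : ℝ) :
    |softCall K ε u - max (u - K) 0| ≤ ε := by
  have h1 : |u - K| ≤ Real.sqrt ((u - K) ^ 2 + ε ^ 2) := Real.abs_le_sqrt (by nlinarith)
  have h2 : Real.sqrt ((u - K) ^ 2 + ε ^ 2) ≤ |u - K| + ε := by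
    refine Real.sqrt_le_iff.2 ⟨by positivity, ?_⟩
    nlinarith [sq_abs (u - K), mul_nonneg (abs_nonneg (u - K)) hε.le]
  have h3 : max (u - K) 0 = (|u - K| + (u - K)) / 2 := by
    rcases le_total (u - K) 0 with h | h
    · rw [max_eq_right h, abs_of_nonpos h]; ring
    · rw [max_eq_left h, abs_of_nonneg h]; ring
  rw [h3, softCall, abs_le]
  constructor <;> linarith

lemma Amplitude.continuous {R : (Fin d → ℝ) → ℝ} {DR : Fin d → (Fin d → ℝ) → ℝ}
    (hRD : HasGrad R DR) (hDRA : ∀ k, Amplitude R (DR k)) {Q : (Fin d → ℝ) → ℝ}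
    (hQ : Amplitude R Q) : Continuous Q := by
  obtain ⟨E, -, hE⟩ := hQ.exists_grad hRD hDRA
  exact hE.continuous

/-- The derivative of `y ↦ E[φ(S) Q]` for smooth `φ`. Since `R = 1/∂_jS`, one has
`φ'(S) ∂_kS Q = ∂_j(φ(S)) · (∂_kS R Q)`, and an integration by parts in `x_j` removes the derivative
from `φ`. The resulting amplitudes `E k` do not depend on `φ`. -/
lemma exists_hasFDerivAt_of_smooth {S R : (Fin d → ℝ) → ℝ} {DS DR : Fin d → (Fin d → ℝ) → ℝ}
    (hS : HasGrad S DS) (hDSA : ∀ k, Amplitude R (DS k)) (hR : ExpGrowth R) (hRD : HasGrad R DR)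
    (hDRA : ∀ k, Amplitude R (DR k)) {j : Fin d} (hinv : ∀ x, DS j x * R x = 1) (hj : j ∈ v)
    {Q : (Fin d → ℝ) → ℝ} (hQ : Amplitude R Q) :
    ∃ E : Fin d → (Fin d → ℝ) → ℝ, (∀ k, Amplitude R (E k)) ∧
      ∀ φ φ' : ℝ → ℝ, (∀ u, HasDerivAt φ (φ' u) u) → Continuous φ' → (∀ u, |φ' u| ≤ 1) →
        ExpGrowth (fun x => φ (S x)) → ∀ y : {i : Fin d // i ∉ v} → ℝ,
        HasFDerivAt (Pv v stdNormalPdf (fun x => φ (S x) * Q x))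
          (∑ k, Pv v stdNormalPdf (fun x => φ (S x) * E k x) y • outProj v k) y := by
  obtain ⟨DQ, hDQA, hDQ⟩ := hQ.exists_grad hRD hDRA
  have hMA : ∀ k, Amplitude R (fun x => Q x * (DS k x * R x)) :=
    fun k => hQ.mul ((hDSA k).mul .recip)
  choose DM hDMA hDM using fun k => (hMA k).exists_grad hRD hDRA
  have hEA : ∀ k, Amplitude R
      (fun x => DQ k x + (x j * (Q x * (DS k x * R x)) + (-1) * DM k j x)) := fun k =>
    (hDQA k).add (((Amplitude.coord j).mul (hMA k)).add ((Amplitude.const (-1)).mul (hDMA k j)))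
  refine ⟨_, hEA, fun φ φ' hφ hφ'c hφ'b hφg y => ?_⟩
  have gr : ∀ {F}, Amplitude R F → ExpGrowth F := fun h => h.expGrowth hR
  have ct : ∀ {F}, Amplitude R F → Continuous F := fun h => h.continuous hRD hDRA
  have hφS := HasGrad.comp hφ hS
  have hφ'g : ExpGrowth (fun x => φ' (S x)) :=
    (ExpGrowth.const 1).mono fun x => by simpa using hφ'b (S x)
  have hφ'Sc : Continuous fun x => φ' (S x) := hφ'c.comp hS.continuous
  have hg' : ∀ k, ExpGrowth (fun x => φ' (S x) * DS k x) := fun k => hφ'g.mul (gr (hDSA k))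
  have hc' : ∀ k, Continuous (fun x => φ' (S x) * DS k x) := fun k => hφ'Sc.mul (ct (hDSA k))
  have h1 := (hφS.mul hDQ).hasFDerivAt_Pv (v := v) (hφg.mul (gr hQ))
    (fun k => (hφS.continuous.mul (ct (hDQA k))).add ((ct hQ).mul (hc' k)))
    (fun k => (hφg.mul (gr (hDQA k))).add ((gr hQ).mul (hg' k))) y
  refine h1.congr_fderiv (Finset.sum_congr rfl fun k _ => ?_)
  congr 1
  have hHg := hφg.mul (gr (hMA k))
  have hHc := hφS.continuous.mul (ct (hMA k))
  have hbg := (hφg.mul (gr (hDMA k j))).add ((gr (hMA k)).mul (hg' j))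
  have hbc := (hφS.continuous.mul (ct (hDMA k j))).add ((ct (hMA k)).mul (hc' j))
  have h2 := (hφS.mul (hDM k)).Pv_partial_eq (v := v) hHg hj hbc hbg y
  have h3 := Pv_add_sub (v := v) (hφg.mul (gr (hEA k))) (hφS.continuous.mul (ct (hEA k)))
    hbg hbc ((ExpGrowth.coord j).mul hHg) ((continuous_apply j).mul hHc) y
  rw [h2, sub_self, add_zero] at h3
  rw [← h3]
  congr 1
  funext x
  linear_combination (-(Q x * φ' (S x) * DS k x)) * hinv x

/-- The derivative formula of `exists_hasFDerivAt_of_smooth` passes to the call payoff by uniform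
approximation. -/
lemma exists_hasFDerivAt_call {S R : (Fin d → ℝ) → ℝ} {DS DR : Fin d → (Fin d → ℝ) → ℝ}
    (hS : HasGrad S DS) (hSg : ExpGrowth S)
    (hDSA : ∀ k, Amplitude R (DS k)) (hR : ExpGrowth R) (hRD : HasGrad R DR)
    (hDRA : ∀ k, Amplitude R (DR k)) {j : Fin d} (hinv : ∀ x, DS j x * R x = 1) (hj : j ∈ v)
    (K : ℝ) {Q : (Fin d → ℝ) → ℝ} (hQ : Amplitude R Q) :
    ∃ E : Fin d → (Fin d → ℝ) → ℝ, (∀ k, Amplitude R (E k)) ∧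
      ∀ y : {i : Fin d // i ∉ v} → ℝ,
        HasFDerivAt (Pv v stdNormalPdf (fun x => max (S x - K) 0 * Q x))
          (∑ k, Pv v stdNormalPdf (fun x => max (S x - K) 0 * E k x) y • outProj v k) y := by
  obtain ⟨E, hEA, hE⟩ := exists_hasFDerivAt_of_smooth (v := v) hS hDSA hR hRD hDRA hinv hj hQ
  refine ⟨E, hEA, fun y₀ => ?_⟩
  have hScont := hS.continuous
  have hmaxg : ExpGrowth (fun x => max (S x - K) 0) := by
    refine (hSg.add (ExpGrowth.const (-K))).mono fun x => ?_
    rw [abs_of_nonneg (le_max_right _ _), ← sub_eq_add_neg]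
    exact max_le (le_abs_self _) (abs_nonneg _)
  have hmaxc : Continuous (fun x => max (S x - K) 0) := by fun_prop
  set ε : ℕ → ℝ := fun n => 1 / ((n : ℝ) + 1) with hεdef
  have hε : ∀ n, 0 < ε n := fun n => by positivity
  have hεlim : Tendsto ε atTop (nhds 0) := tendsto_one_div_add_atTop_nhds_zero_nat
  have hsc : ∀ n, Continuous (fun x => softCall K (ε n) (S x)) := fun n => by
    unfold softCall
    fun_prop
  have hsg : ∀ n, ExpGrowth (fun x => softCall K (ε n) (S x)) := fun n => by
    have : ExpGrowth (fun x => softCall K (ε n) (S x) - max (S x - K) 0) :=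
      (ExpGrowth.const (ε n)).mono fun x =>
        (abs_softCall_sub_le K (hε n) (S x)).trans (le_abs_self _)
    simpa using this.add hmaxg
  -- the error made by replacing the call payoff by its smooth approximation
  have err : ∀ F : (Fin d → ℝ) → ℝ, Amplitude R F → ∃ c : ℝ,
      ∀ y : {i : Fin d // i ∉ v} → ℝ, ∑ i, |y i| < ∑ i, |y₀ i| + 1 → ∀ n,
        |Pv v stdNormalPdf (fun x => max (S x - K) 0 * F x) y -
          Pv v stdNormalPdf (fun x => softCall K (ε n) (S x) * F x) y| ≤ ε n * c := by
    intro F hF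
    have hFg := hF.expGrowth hR
    have hFc := hF.continuous hRD hDRA
    obtain ⟨c, hc⟩ := hFg.exists_Pv_sub_le (v := v) (∑ i, |y₀ i| + 1)
    refine ⟨c, fun y hy n => hc y hy.le _ _ (hmaxg.mul hFg) (hmaxc.mul hFc) ((hsg n).mul hFg)
      ((hsc n).mul hFc) (ε n) (hε n).le fun x => ?_⟩
    rw [← sub_mul, abs_mul, abs_sub_comm]
    exact mul_le_mul_of_nonneg_right (abs_softCall_sub_le K (hε n) (S x)) (abs_nonneg _)
  refine hasFDerivAt_of_tendstoUniformlyOn (𝕜 := ℝ) (l := atTop)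
    (s := {y : {i : Fin d // i ∉ v} → ℝ | ∑ i, |y i| < ∑ i, |y₀ i| + 1})
    (f := fun n => Pv v stdNormalPdf (fun x => softCall K (ε n) (S x) * Q x))
    (f' := fun n y => ∑ k, Pv v stdNormalPdf (fun x => softCall K (ε n) (S x) * E k x) y •
      outProj v k)
    (g' := fun y => ∑ k, Pv v stdNormalPdf (fun x => max (S x - K) 0 * E k x) y • outProj v k)
    (isOpen_lt (by fun_prop) continuous_const) ?_ ?_ ?_ (by simp)
  · choose c hc using fun k => err (E k) (hEA k)
    have hlim : Tendsto (fun n => ∑ k, ε n * c k * ‖outProj v k‖) atTop (nhds 0) := by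
      have := tendsto_finsetSum (Finset.univ : Finset (Fin d)) fun k _ =>
        (hεlim.mul_const (c k)).mul_const ‖outProj v k‖
      simpa using this
    refine Metric.tendstoUniformlyOn_iff.2 fun δ hδ => ?_
    filter_upwards [hlim.eventually_lt_const hδ] with n hn y hy
    refine lt_of_le_of_lt ?_ hn
    rw [dist_eq_norm, ← Finset.sum_sub_distrib]
    refine (norm_sum_le _ _).trans (Finset.sum_le_sum fun k _ => ?_)
    rw [← sub_smul, norm_smul, Real.norm_eq_abs]
    exact mul_le_mul_of_nonneg_right (hc k y hy n) (norm_nonneg _)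
  · intro n y _
    have hpos : ∀ u, Real.sqrt ((u - K) ^ 2 + ε n ^ 2) ≠ 0 := fun u =>
      (Real.sqrt_pos.2 (by have := hε n; positivity)).ne'
    refine hE (softCall K (ε n)) _ (hasDerivAt_softCall K (hε n)) ?_
      (abs_deriv_softCall_le K (hε n)) (hsg n) y
    fun_prop (disch := exact hpos _)
  · intro y hy
    obtain ⟨c, hc⟩ := err Q hQ
    rw [tendsto_iff_dist_tendsto_zero]
    refine squeeze_zero (fun _ => dist_nonneg) (fun n => ?_) (by simpa using hεlim.mul_const c)
    rw [dist_comm, Real.dist_eq]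
    exact hc y hy n

/-- The functions `y ↦ E[max(S - K, 0) Q]`, with `Q` an amplitude, form a class closed under
partial derivatives, hence consist of smooth functions. -/
lemma contDiff_call {S R : (Fin d → ℝ) → ℝ} {DS DR : Fin d → (Fin d → ℝ) → ℝ}
    (hS : HasGrad S DS) (hSg : ExpGrowth S)
    (hDSA : ∀ k, Amplitude R (DS k)) (hR : ExpGrowth R) (hRD : HasGrad R DR)
    (hDRA : ∀ k, Amplitude R (DR k)) {j : Fin d} (hinv : ∀ x, DS j x * R x = 1) (hj : j ∈ v)
    (K : ℝ) (n : ℕ) {Q : (Fin d → ℝ) → ℝ} (hQ : Amplitude R Q) :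
    ContDiff ℝ n (Pv v stdNormalPdf (fun x => max (S x - K) 0 * Q x)) := by
  induction n generalizing Q with
  | zero =>
    obtain ⟨E, -, hE⟩ := exists_hasFDerivAt_call (v := v) hS hSg hDSA hR hRD hDRA hinv hj K hQ
    exact contDiff_zero.2 (continuous_iff_continuousAt.2 fun y => (hE y).continuousAt)
  | succ n ih =>
    obtain ⟨E, hEA, hE⟩ := exists_hasFDerivAt_call (v := v) hS hSg hDSA hR hRD hDRA hinv hj K hQ
    push_cast
    refine contDiff_succ_iff_fderiv.2
      ⟨fun y => (hE y).differentiableAt, fun h => absurd h (by simp), ?_⟩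
    rw [funext fun y => (hE y).fderiv]
    exact ContDiff.sum fun k _ => (ih (hEA k)).smul contDiff_const

end Iteration

/-! ### The Asian option -/

/-- The Brownian covariance matrix is nonsingular, so no column of `A` vanishes. -/
lemma exists_column_ne_zero {d : ℕ} {T : ℝ} (hT : 0 < T) (A : Matrix (Fin d) (Fin d) ℝ)
    (hA : ∀ i k : Fin d, (A * A.transpose) i k = T / d * (↑(min (i : ℕ) (k : ℕ)) + 1))
    (j : Fin d) : ∃ i, A i j ≠ 0 := by
  by_contra! hcon
  have hdet : A.det = 0 := Matrix.det_eq_zero_of_column_eq_zero j hcon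
  obtain ⟨u, hu, huA⟩ := Matrix.exists_vecMul_eq_zero_iff.2 hdet
  have hd : 0 < (d : ℝ) := by exact_mod_cast (Fin.pos j)
  have hz : Matrix.vecMul u (A * A.transpose) = 0 := by
    rw [← Matrix.vecMul_vecMul, huA, Matrix.zero_vecMul]
  have h0 : ∀ k : ℕ, k < d → ∑ i : Fin d, u i * ((min (i : ℕ) k : ℕ) + 1 : ℝ) = 0 := by
    intro k hk
    have h1 := congrFun hz ⟨k, hk⟩
    simp only [Matrix.vecMul, dotProduct, hA, Pi.zero_apply] at h1
    have h2 : T / d * ∑ i : Fin d, u i * ((min (i : ℕ) k : ℕ) + 1 : ℝ) = 0 := by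
      rw [← h1, Finset.mul_sum]
      exact Finset.sum_congr rfl fun i _ => by ring
    exact (mul_eq_zero.1 h2).resolve_left (by positivity)
  -- differences of consecutive equations are the tail sums of `u`
  have tail : ∀ k : ℕ, k ≤ d → ∑ i : Fin d, (if k ≤ (i : ℕ) then u i else 0) = 0 := by
    intro k hk
    rcases hk.eq_or_lt with rfl | hk
    · exact Finset.sum_eq_zero fun i _ => by simp
    rcases k with _ | k
    · simpa using h0 0 hk
    · have h1 := h0 (k + 1) hk
      have h2 := h0 k (by omega)
      have h3 := sub_eq_zero.2 (h1.trans h2.symm)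
      rw [← Finset.sum_sub_distrib] at h3
      refine Eq.trans ?_ h3
      refine Finset.sum_congr rfl fun i _ => ?_
      split_ifs with h
      · rw [min_eq_right h, min_eq_right (by omega)]
        push_cast
        ring
      · rw [min_eq_left (by omega), min_eq_left (by omega)]
        ring
  refine hu (funext fun k => ?_)
  have h1 := tail k k.2.le
  have h2 := tail (k + 1) k.2
  have h3 : ∑ i : Fin d, ((if (k : ℕ) ≤ i then u i else 0) - if (k : ℕ) + 1 ≤ i then u i else 0)
      = u k := by
    rw [Finset.sum_eq_single k]
    · simp
    · intro i _ hi
      have : (i : ℕ) ≠ k := fun h => hi (Fin.ext h)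
      split_ifs <;> first | omega | simp
    · simp
  rw [Finset.sum_sub_distrib, h1, h2] at h3
  simpa using h3.symm

/-- for the arithmetic Asian call payoff
`f(x) = e^{−μT}·max(S_A(x) − K, 0)`, if the `j`-th column of the generating matrix
has constant sign, then `P_v f ∈ C^∞(ℝ^{d−|v|})` for every `v ∋ j`. -/
theorem stmt_17 (d : ℕ) (hd : 1 ≤ d) (S0 σ T K μ : ℝ)
    (hS0 : 0 < S0) (hσ : 0 < σ) (hT : 0 < T) (hK : 0 < K)
    (A : Matrix (Fin d) (Fin d) ℝ)
    (hA : ∀ i k : Fin d, (A * A.transpose) i k = T / d * (↑(min (i : ℕ) (k : ℕ)) + 1))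
    (j : Fin d) (hcol : (∀ i, 0 ≤ A i j) ∨ (∀ i, A i j ≤ 0)) :
    ∀ v : Finset (Fin d), j ∈ v →
      ContDiff ℝ (⊤ : ℕ∞) (Pv v stdNormalPdf (fun x =>
        Real.exp (-μ * T) *
          max ((1 / d) * ∑ i, Sprice d S0 σ μ (T / d) A i x - K) 0)) := by
  intro v hj
  have hd' : 0 < (d : ℝ) := by exact_mod_cast hd
  -- `S_A = ∑ i, c i · exp ⟨b i, x⟩`
  set c : Fin d → ℝ := fun i =>
    (1 / d) * (S0 * Real.exp ((μ - σ ^ 2 / 2) * ((i : ℕ) + 1) * (T / d))) with hc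
  set b : Fin d → Fin d → ℝ := fun i k => σ * A i k with hb
  have hSA : ∀ x, (1 / d) * ∑ i, Sprice d S0 σ μ (T / d) A i x = expSum c b x := by
    intro x
    rw [expSum, Finset.mul_sum]
    refine Finset.sum_congr rfl fun i _ => ?_
    simp only [Sprice, hc, hb, Real.exp_add, Finset.mul_sum, mul_assoc]
  have hcpos : ∀ i, 0 < c i := fun i => by positivity
  obtain ⟨i₀, hi₀⟩ := exists_column_ne_zero hT A hA j
  have hsign : (∀ i, 0 ≤ c i * b i j) ∨ (∀ i, c i * b i j ≤ 0) := by
    refine hcol.imp (fun h i => ?_) (fun h i => ?_)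
    · exact mul_nonneg (hcpos i).le (mul_nonneg hσ.le (h i))
    · exact mul_nonpos_of_nonneg_of_nonpos (hcpos i).le
        (mul_nonpos_of_nonneg_of_nonpos hσ.le (h i))
  obtain ⟨hP, hR⟩ := expSum_sign (c := fun i => c i * b i j) b hsign (i₀ := i₀)
    (mul_ne_zero (hcpos i₀).ne' (mul_ne_zero hσ.ne' hi₀))
  set P := expSum (fun i => c i * b i j) b with hPdef
  have hRD : HasGrad (fun x => (P x)⁻¹) (fun k x =>
      ((-1) * ((P x)⁻¹ * (P x)⁻¹)) * expSum (fun i => c i * b i j * b i k) b x) := by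
    intro x
    refine ((hasDerivAt_inv (hP x)).comp_hasFDerivAt x
      (HasGrad.expSum (fun i => c i * b i j) b x)).congr_fderiv ?_
    rw [Finset.smul_sum]
    refine Finset.sum_congr rfl fun k _ => ?_
    rw [smul_smul]
    congr 2
    rw [sq, mul_inv]
    ring
  have hS := HasGrad.expSum c b
  rw [contDiff_infty]
  intro n
  have main := contDiff_call (v := v) (R := fun x => (P x)⁻¹) hS
    ((Amplitude.expSum c b).expGrowth hR) (fun k => Amplitude.expSum _ b) hR hRD
    (fun k => ((Amplitude.const (-1)).mul (Amplitude.recip.mul .recip)).mul (Amplitude.expSum _ b))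
    (fun x => mul_inv_cancel₀ (hP x)) hj K n (Amplitude.const (Real.exp (-μ * T)))
  simpa only [hSA, mul_comm (Real.exp (-μ * T))] using main
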